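/- Let Γ be an n-rose labeled graph with all labels positive and n ≤ 3, and let γ = (e₁,…,eₛ,e) be a strict monotone cycle in Γ for some s ≥ 0. Suppose Γ′ is obtained from Γ by a single slide move of eᵢ or ēᵢ (for some 1 ≤ i ≤ s) over the edge ē. Then Γ′ contains a strict monotone cycle. -/

import Mathlib

/-! Labeled graphs in the sense of generalized Baumslag–Solitar theory. -/

structure LGraph (V E : Type) where
  o : E → V
  bar : E → E
  bar_bar : ∀ e, bar (bar e) = e
  bar_ne : ∀ e, bar e ≠ e
  lab : E → ℤ

namespace LGraph

variable {V E V' E' : Type}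

/-- Terminal vertex of an oriented edge. -/
def t (G : LGraph V E) (e : E) : V := G.o (G.bar e)

/-- All labels are positive. -/
def Positive (G : LGraph V E) : Prop := ∀ e : E, 0 < G.lab e

/-- No collapsible edge: every label-1 edge is a loop. -/
def Reduced (G : LGraph V E) : Prop := ∀ e : E, G.lab e = 1 → G.o e = G.t e

/-- An `n`-rose: one vertex and `n` pairs of oriented edges. -/
def IsRose (G : LGraph V E) (n : ℕ) : Prop :=
  Nat.card V = 1 ∧ Nat.card E = 2 * n

/-- Modulus of a single oriented edge: `λ(ē)/λ(e)`. -/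
def qe (G : LGraph V E) (e : E) : ℚ := (G.lab (G.bar e) : ℚ) / (G.lab e : ℚ)

/-- Modulus of an edge path. -/
def q (G : LGraph V E) (l : List E) : ℚ := (l.map G.qe).prod

/-- Consecutive edges match up. -/
def IsEdgePath (G : LGraph V E) (l : List E) : Prop :=
  List.Chain' (fun a b => G.t a = G.o b) l

/-- An `e`-edge path. -/
def IsEEdgePath (G : LGraph V E) (e : E) (l : List E) : Prop :=
  G.IsEdgePath l ∧
  (∀ a ∈ l, a ≠ e ∧ a ≠ G.bar e) ∧
  (∀ a ∈ l.head?, G.o a = G.o e) ∧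
  ∀ i : Fin l.length, ∃ k : ℤ,
    (G.lab e : ℚ) * G.q (l.take i.1) = (k : ℚ) * (G.lab (l.get i) : ℚ)

/-- A monotone cycle `(e₁,…,eₛ,e)`. -/
def IsMonotoneCycle (G : LGraph V E) (l : List E) (e : E) : Prop :=
  G.IsEEdgePath (G.bar e) l ∧
  G.t (l.getLastD e) = G.o e ∧
  ∃ k : ℤ, G.q (l ++ [e]) = (k : ℚ)

/-- A strict monotone cycle. -/
def IsStrictMonotoneCycle (G : LGraph V E) (l : List E) (e : E) : Prop :=
  G.IsMonotoneCycle l e ∧ G.q (l ++ [e]) ≠ 1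

def HasStrictMonotoneCycle (G : LGraph V E) : Prop :=
  ∃ (l : List E) (e : E), G.IsStrictMonotoneCycle l e

/-- A strict `e`-integer cycle. -/
def IsStrictIntegerCycle (G : LGraph V E) (e : E) (l : List E) : Prop :=
  G.IsEEdgePath e l ∧ l ≠ [] ∧
  G.t (l.getLastD e) = G.o (l.headD e) ∧
  (∃ k : ℤ, G.q l = (k : ℚ)) ∧ G.q l ≠ 1

/-- A mobile edge. -/
def Mobile (G : LGraph V E) (e : E) : Prop :=
  (∃ l, G.IsStrictMonotoneCycle l e ∨ G.IsStrictMonotoneCycle l (G.bar e)) ∨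
  (∃ l, G.IsStrictIntegerCycle e l ∨ G.IsStrictIntegerCycle (G.bar e) l)

/-- The single slide of `e` over `f` is permitted. -/
def CanSlide (G : LGraph V E) (e f : E) : Prop :=
  f ≠ e ∧ f ≠ G.bar e ∧ G.o f = G.o e ∧ G.lab f ∣ G.lab e

open Classical in
/-- The result of the single slide of `e` over `f`. -/
noncomputable def slide (G : LGraph V E) (e f : E) : LGraph V E where
  o := fun x => if x = e then G.t f else G.o x
  bar := G.bar
  bar_bar := G.bar_bar
  bar_ne := G.bar_ne
  lab := fun x => if x = e then G.lab e * G.lab (G.bar f) / G.lab f else G.lab x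

/-- Successively slide `e` over the edges of a path. -/
noncomputable def slidePath : LGraph V E → E → List E → LGraph V E
  | G, _, [] => G
  | G, e, f :: l => slidePath (G.slide e f) e l

/-- Each single slide in the successive slide of `e` over a path is permitted. -/
def CanSlidePath : LGraph V E → E → List E → Prop
  | _, _, [] => True
  | G, e, f :: l => G.CanSlide e f ∧ CanSlidePath (G.slide e f) e l

/-- Each single slide is permitted and each intermediate graph is reduced. -/
def GoodSlidePath : LGraph V E → E → List E → Prop
  | _, _, [] => True
  | G, e, f :: l => G.CanSlide e f ∧ (G.slide e f).Reduced ∧ GoodSlidePath (G.slide e f) e l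

/-- Perform a finite sequence of single slides, given as pairs (slid edge, edge slid over). -/
noncomputable def slideSeq : LGraph V E → List (E × E) → LGraph V E
  | G, [] => G
  | G, p :: rest => slideSeq (G.slide p.1 p.2) rest

/-- A sequence of permitted single slides, each sliding a mobile edge. -/
def MobileSlideSeq : LGraph V E → List (E × E) → Prop
  | _, [] => True
  | G, p :: rest => G.Mobile p.1 ∧ G.CanSlide p.1 p.2 ∧ MobileSlideSeq (G.slide p.1 p.2) rest

/-- Isomorphism of labeled graphs. -/
def Isom (G : LGraph V E) (G' : LGraph V' E') : Prop :=
  ∃ (φ : V → V') (Φ : E → E'),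
    Function.Bijective φ ∧ Function.Bijective Φ ∧
    (∀ x, G'.o (Φ x) = φ (G.o x)) ∧
    (∀ x, G'.bar (Φ x) = Φ (G.bar x)) ∧
    (∀ x, G'.lab (Φ x) = G.lab x)

open Classical in
/-- The result of the induction move at the loop `e` with multiplier `m`. -/
noncomputable def inductionMove (G : LGraph V E) (e : E) (m : ℤ) : LGraph V E where
  o := G.o
  bar := G.bar
  bar_bar := G.bar_bar
  bar_ne := G.bar_ne
  lab := fun x => if x ≠ e ∧ x ≠ G.bar e ∧ G.o x = G.o e then m * G.lab x else G.lab x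

/-- `G'` is obtained from `G` by a single slide move (up to isomorphism). -/
def IsSlideMove (G : LGraph V E) (G' : LGraph V' E') : Prop :=
  ∃ e f, G.CanSlide e f ∧ Isom G' (G.slide e f)

/-- `G'` is obtained from `G` by a (forward) induction move. -/
def IsInductionMove (G : LGraph V E) (G' : LGraph V' E') : Prop :=
  ∃ (e : E) (m : ℤ), G.o e = G.t e ∧ G.lab e = 1 ∧ 1 ≤ m ∧ m ∣ G.lab (G.bar e) ∧
    Isom G' (G.inductionMove e m)

/-- `G'` is obtained from `G` by an A-move. -/
def IsAMove (G : LGraph V E) (G' : LGraph V' E') : Prop :=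
  ∃ (e d : E) (e' : E') (φ : V → V') (Φ : E → E'),
    G.o e = G.t e ∧ G.lab e = 1 ∧ G.lab (G.bar e) ≠ 1 ∧
    G.o d = G.o e ∧ G.t d ≠ G.o e ∧
    G.lab d ≠ 1 ∧ G.lab (G.bar d) ≠ 1 ∧ G.lab d ∣ G.lab (G.bar e) ∧
    (∀ x : E, G.o x = G.o e → x = e ∨ x = G.bar e ∨ x = d) ∧
    G'.o e' = φ (G.t d) ∧ G'.t e' = φ (G.t d) ∧
    G'.lab e' = G.lab (G.bar d) ∧
    G'.lab (G'.bar e') = G.lab (G.bar d) * G.lab (G.bar e) ∧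
    (∀ w₁ w₂ : V, w₁ ≠ G.o e → w₂ ≠ G.o e → φ w₁ = φ w₂ → w₁ = w₂) ∧
    (∀ v' : V', ∃ w : V, w ≠ G.o e ∧ φ w = v') ∧
    (∀ x : E, x ≠ e → x ≠ G.bar e → x ≠ d → x ≠ G.bar d →
      Φ x ≠ e' ∧ Φ x ≠ G'.bar e' ∧
      G'.o (Φ x) = φ (G.o x) ∧ G'.bar (Φ x) = Φ (G.bar x) ∧ G'.lab (Φ x) = G.lab x) ∧
    (∀ x y : E, x ≠ e → x ≠ G.bar e → x ≠ d → x ≠ G.bar d →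
      y ≠ e → y ≠ G.bar e → y ≠ d → y ≠ G.bar d → Φ x = Φ y → x = y) ∧
    (∀ y : E', y ≠ e' → y ≠ G'.bar e' →
      ∃ x : E, x ≠ e ∧ x ≠ G.bar e ∧ x ≠ d ∧ x ≠ G.bar d ∧ Φ x = y)

/-- A strict ascending loop: a loop with `λ(e) = 1 ≠ λ(ē)`. -/
def HasStrictAscendingLoop (G : LGraph V E) : Prop :=
  ∃ e : E, G.o e = G.t e ∧ G.lab e = 1 ∧ G.lab (G.bar e) ≠ 1

end LGraph

/-- A labeled graph with its vertex and edge types bundled. -/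
structure BGraph where
  V : Type
  E : Type
  G : LGraph V E

/-- An elementary deformation move: a slide, an induction move or its inverse,
or an A-move or its inverse. -/
def BGraph.ElemMove (X Y : BGraph) : Prop :=
  LGraph.IsSlideMove X.G Y.G ∨ LGraph.IsInductionMove X.G Y.G ∨
  LGraph.IsInductionMove Y.G X.G ∨ LGraph.IsAMove X.G Y.G ∨ LGraph.IsAMove Y.G X.G

/-- A finite sequence of elementary moves with all intermediate graphs reduced. -/
def BGraph.MoveSeq : BGraph → BGraph → Prop :=
  Relation.ReflTransGen (fun X Y => X.ElemMove Y ∧ Y.G.Reduced)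

/-- A reduced labeled graph is non-ascending if no reduced labeled graph obtained from it
by slide, induction and A-moves (all intermediate graphs reduced) contains a
strict ascending loop. -/
def LGraph.NonAscending {V E : Type} (G : LGraph V E) : Prop :=
  ∀ Y : BGraph, BGraph.MoveSeq ⟨V, E, G⟩ Y → ¬ Y.G.HasStrictAscendingLoop

/-!
Call a pair `(v, x)` of a vertex and an integer a *state*; an edge `a` carries `(o a, k λ(a))` to
`(t a, k λ(ā))`. A strict monotone cycle at `e` is a way to carry `(t e, λ(ē))` to `(o e, k λ(e))`
without using `e` and `ē`, for some `k ≠ 1`. In this picture no rational number appears, and states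
can be multiplied by integers.

Write `λ(g) = λ(ē) c`, let `Γ'` be the result of sliding `g` over `ē`, and suppose that `Γ'` has no
strict monotone cycle. Testing this on `e`, `g` and `ḡ` in `Γ'` restricts how the edges other than
`e`, `ē`, `g`, `ḡ` carry states between `P = (t e, λ(ē))`, `R = (t g, c λ(ḡ))` and `(o e, λ(e))`.
These edges form at most one pair `h`, `h̄`, and if `h` is a loop, neither of its labels properly
divides the other; so they cannot carry `(v, x)` to `(v, k x)` with `k ≠ 1`. Hence each crossing of
`g` or `ḡ` on a route that starts at `P` ends in `P` or `R` exactly, the latter only when `c` is a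
unit, and such a route reaches `(o e, k λ(e))` only for `k = 1`: `Γ` has no strict monotone cycle
at `e` either.
-/

theorem eq_one_of_mul_pow_eq_pow {R : Type*} [CommRing R] [IsDomain R]
    [IsIntegrallyClosed R] {a b k : R} {n : ℕ} (ha : a ≠ 0) (hab : a ∣ b → a = b)
    (h : k * a ^ n = b ^ n) : k = 1 := by
  rcases eq_or_ne n 0 with rfl | hn
  · simpa using h
  · obtain rfl : a = b := hab ((IsIntegrallyClosed.pow_dvd_pow_iff hn).1 ⟨k, by rw [← h, mul_comm]⟩)
    exact mul_right_cancel₀ (pow_ne_zero n ha) (by rw [h, one_mul])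

namespace LGraph

variable {V E : Type} {G : LGraph V E} {A B : Set E} {s s' : V × ℤ} {v w : V} {x y k : ℤ}

theorem t_bar (G : LGraph V E) (a : E) : G.t (G.bar a) = G.o a := by
  rw [t, G.bar_bar]

/-! ### Transport of states -/

/-- Transport of states along a single edge in `A`. A state `(v, x)` stands for the `x`-th power of
the generator of the vertex group at `v`. -/
inductive Step (G : LGraph V E) (A : Set E) : V × ℤ → V × ℤ → Prop
  | mk (a : E) (ha : a ∈ A) (k : ℤ) :
      Step G A (G.o a, k * G.lab a) (G.t a, k * G.lab (G.bar a))

/-- Transport of states along an edge path with edges in `A`; this turns the divisibility conditions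
on an `e`-edge path into steps between integers. -/
abbrev Reach (G : LGraph V E) (A : Set E) : V × ℤ → V × ℤ → Prop :=
  Relation.ReflTransGen (G.Step A)

theorem Reach.mono (hAB : A ⊆ B) (h : G.Reach A s s') : G.Reach B s s' :=
  Relation.ReflTransGen.mono (fun _ _ ⟨a, ha, k⟩ => ⟨a, hAB ha, k⟩) _ _ h

theorem Reach.const_mul (c : ℤ) (h : G.Reach A (v, x) (w, y)) :
    G.Reach A (v, c * x) (w, c * y) := by
  refine h.lift (fun s => (s.1, c * s.2)) fun _ _ ⟨a, ha, k⟩ => ?_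
  simpa only [mul_assoc] using Step.mk a ha (c * k)

theorem reach_edge {a : E} (ha : a ∈ A) (k : ℤ) :
    G.Reach A (G.o a, k * G.lab a) (G.t a, k * G.lab (G.bar a)) :=
  .single ⟨a, ha, k⟩

theorem reach_edge_bar {a : E} (ha : G.bar a ∈ A) (k : ℤ) :
    G.Reach A (G.t a, k * G.lab (G.bar a)) (G.o a, k * G.lab a) := by
  have h := reach_edge (G := G) ha k
  rwa [t_bar, G.bar_bar] at h

/-! ### Monotone cycles as transport of states -/

theorem q_cons (G : LGraph V E) (a : E) (l : List E) : G.q (a :: l) = G.qe a * G.q l := by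
  simp [q]

theorem q_concat (G : LGraph V E) (l : List E) (a : E) : G.q (l ++ [a]) = G.q l * G.qe a := by
  simp [q]

/-- The divisibility conditions along an edge path that starts with the number `x`; an `e`-edge path
requires them for `x = λ(e)`. -/
def DvdAlong (G : LGraph V E) (x : ℚ) (l : List E) : Prop :=
  ∀ i : Fin l.length, ∃ k : ℤ, x * G.q (l.take i.1) = (k : ℚ) * (G.lab (l.get i) : ℚ)

theorem dvdAlong_nil (x : ℚ) : G.DvdAlong x [] := fun i => i.elim0

theorem dvdAlong_cons (x : ℚ) (a : E) (l : List E) :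
    G.DvdAlong x (a :: l) ↔
      (∃ k : ℤ, x = (k : ℚ) * (G.lab a : ℚ)) ∧ G.DvdAlong (x * G.qe a) l := by
  simp [DvdAlong, Fin.forall_fin_succ, q, mul_assoc]

theorem mul_lab_mul_qe {a : E} (ha : G.lab a ≠ 0) (k : ℤ) :
    ((k * G.lab a : ℤ) : ℚ) * G.qe a = ((k * G.lab (G.bar a) : ℤ) : ℚ) := by
  have ha' : (G.lab a : ℚ) ≠ 0 := by exact_mod_cast ha
  rw [qe]
  push_cast
  field_simp

-- The start vertex is written as `t d` so that the induction moves along the path.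
theorem reach_of_dvdAlong (hlab : ∀ a, G.lab a ≠ 0) {l : List E} {d : E}
    (hpath : G.IsEdgePath (d :: l)) (hA : ∀ a ∈ l, a ∈ A) (hdvd : G.DvdAlong x l)
    (hxy : (x : ℚ) * G.q l = y) : G.Reach A (G.t d, x) (G.t (l.getLastD d), y) := by
  induction l generalizing d x with
  | nil =>
    obtain rfl : x = y := by simpa [q] using hxy
    exact .refl
  | cons a l ih =>
    obtain ⟨hda, hpath⟩ := List.isChain_cons_cons.1 hpath
    obtain ⟨⟨k, hk⟩, hdvd⟩ := (dvdAlong_cons _ _ _).1 hdvd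
    obtain rfl : x = k * G.lab a := by exact_mod_cast hk
    rw [mul_lab_mul_qe (hlab a)] at hdvd
    rw [q_cons, ← mul_assoc, mul_lab_mul_qe (hlab a)] at hxy
    rw [hda, List.getLastD_cons]
    exact (reach_edge (hA a List.mem_cons_self) k).trans
      (ih hpath (fun b hb => hA b (List.mem_cons_of_mem a hb)) hdvd hxy)

theorem exists_dvdAlong_of_reach (hlab : ∀ a, G.lab a ≠ 0) (h : G.Reach A s s') {d : E}
    (hd : G.t d = s.1) :
    ∃ l, G.IsEdgePath (d :: l) ∧ (∀ a ∈ l, a ∈ A) ∧ G.DvdAlong s.2 l ∧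
      (s.2 : ℚ) * G.q l = s'.2 ∧ G.t (l.getLastD d) = s'.1 := by
  induction h using Relation.ReflTransGen.head_induction_on generalizing d with
  | refl => exact ⟨[], List.isChain_singleton d, by simp, dvdAlong_nil _, by simp [q], hd⟩
  | head hstep _ ih =>
    obtain ⟨a, ha, k⟩ := hstep
    obtain ⟨l, hpath, hA, hdvd, hq, hlast⟩ := ih rfl
    rw [← mul_lab_mul_qe (hlab a)] at hdvd hq
    refine ⟨a :: l, List.isChain_cons_cons.2 ⟨hd, hpath⟩, List.forall_mem_cons.2 ⟨ha, hA⟩,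
      (dvdAlong_cons _ _ _).2 ⟨⟨k, by push_cast; rfl⟩, hdvd⟩, ?_, ?_⟩
    · rw [q_cons, ← mul_assoc, hq]
    · rw [List.getLastD_cons, hlast]

theorem q_concat_eq_iff {l : List E} {e : E} (he : G.lab e ≠ 0) :
    G.q (l ++ [e]) = k ↔ (G.lab (G.bar e) : ℚ) * G.q l = ((k * G.lab e : ℤ) : ℚ) := by
  have he' : (G.lab e : ℚ) ≠ 0 := by exact_mod_cast he
  rw [q_concat, qe, ← mul_div_assoc, div_eq_iff he', mul_comm (G.q l), Int.cast_mul]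

theorem isEdgePath_cons {a : E} {l : List E} :
    G.IsEdgePath (a :: l) ↔ (∀ b ∈ l.head?, G.t a = G.o b) ∧ G.IsEdgePath l :=
  List.isChain_cons

theorem isMonotoneCycle_iff {l : List E} {e : E} :
    G.IsMonotoneCycle l e ↔
      G.IsEdgePath (e :: l) ∧ (∀ a ∈ l, a ∈ ({e, G.bar e}ᶜ : Set E)) ∧
        G.DvdAlong (G.lab (G.bar e)) l ∧ G.t (l.getLastD e) = G.o e ∧
          ∃ k : ℤ, G.q (l ++ [e]) = k := by
  have hpath : G.IsEdgePath (e :: l) ↔ (∀ a ∈ l.head?, G.o a = G.t e) ∧ G.IsEdgePath l := by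
    simp only [isEdgePath_cons, eq_comm]
  have havoid : (∀ a ∈ l, a ∈ ({e, G.bar e}ᶜ : Set E)) ↔
      ∀ a ∈ l, a ≠ G.bar e ∧ a ≠ G.bar (G.bar e) := by
    simp only [Set.mem_compl_iff, Set.mem_insert_iff, Set.mem_singleton_iff, not_or, G.bar_bar,
      ne_eq, and_comm]
  rw [hpath, havoid]
  simp only [IsMonotoneCycle, IsEEdgePath, DvdAlong, t]
  tauto

theorem exists_isStrictMonotoneCycle_iff (hlab : ∀ a, G.lab a ≠ 0) {e : E} :
    (∃ l, G.IsStrictMonotoneCycle l e) ↔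
      ∃ k : ℤ, k ≠ 1 ∧ G.Reach {e, G.bar e}ᶜ (G.t e, G.lab (G.bar e)) (G.o e, k * G.lab e) := by
  constructor
  · rintro ⟨l, hcycle, hstrict⟩
    obtain ⟨hpath, hA, hdvd, hlast, k, hk⟩ := isMonotoneCycle_iff.1 hcycle
    refine ⟨k, fun h => hstrict (by simpa [h] using hk), ?_⟩
    rw [← hlast]
    exact reach_of_dvdAlong hlab hpath hA hdvd ((q_concat_eq_iff (hlab e)).1 hk)
  · rintro ⟨k, hk1, h⟩
    obtain ⟨l, hpath, hA, hdvd, hq, hlast⟩ := exists_dvdAlong_of_reach hlab h rfl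
    have hk : G.q (l ++ [e]) = k := (q_concat_eq_iff (hlab e)).2 hq
    refine ⟨l, isMonotoneCycle_iff.2 ⟨hpath, hA, hdvd, hlast, k, hk⟩, ?_⟩
    rw [hk]
    exact_mod_cast hk1

theorem eq_one_of_reach_of_not_hasStrictMonotoneCycle (hlab : ∀ a, G.lab a ≠ 0)
    (hG : ¬ G.HasStrictMonotoneCycle) {e : E}
    (h : G.Reach {e, G.bar e}ᶜ (G.t e, G.lab (G.bar e)) (G.o e, k * G.lab e)) : k = 1 := by
  by_contra hk
  obtain ⟨l, hl⟩ := (exists_isStrictMonotoneCycle_iff hlab).2 ⟨k, hk, h⟩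
  exact hG ⟨l, e, hl⟩

theorem lab_eq_lab_bar_of_dvd (hlab : ∀ a, G.lab a ≠ 0) (hG : ¬ G.HasStrictMonotoneCycle) {a : E}
    (ha : G.o a = G.t a) (hdvd : G.lab a ∣ G.lab (G.bar a)) : G.lab a = G.lab (G.bar a) := by
  obtain ⟨k, hk⟩ := hdvd
  obtain rfl : k = 1 := eq_one_of_reach_of_not_hasStrictMonotoneCycle hlab hG (e := a)
    (by rw [ha, hk, mul_comm])
  rw [hk, mul_one]

/-! ### Transport along a single pair of edges -/

theorem Reach.mul_potential (hlab : ∀ a, G.lab a ≠ 0) {f : V → ℤ}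
    (hf : ∀ a ∈ A, G.lab a * f (G.t a) = G.lab (G.bar a) * f (G.o a)) (h : G.Reach A s s') :
    s'.2 * f s.1 = s.2 * f s'.1 := by
  induction h with
  | refl => rfl
  | tail _ hstep ih =>
    obtain ⟨a, ha, k⟩ := hstep
    refine mul_left_cancel₀ (hlab a) ?_
    linear_combination G.lab (G.bar a) * ih - s.2 * hf a ha

theorem Reach.exists_mul_pow_eq {h : E} (hs : G.Reach {h, G.bar h} s s') :
    ∃ i j : ℕ, s'.2 * G.lab h ^ i * G.lab (G.bar h) ^ j =
      s.2 * G.lab h ^ j * G.lab (G.bar h) ^ i := by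
  induction hs with
  | refl => exact ⟨0, 0, rfl⟩
  | tail _ hstep ih =>
    obtain ⟨i, j, hij⟩ := ih
    obtain ⟨a, rfl | rfl, k⟩ := hstep
    · exact ⟨i + 1, j, by linear_combination G.lab (G.bar a) * hij⟩
    · refine ⟨i, j + 1, ?_⟩
      rw [G.bar_bar] at *
      linear_combination G.lab h * hij

/-- Transport with edges in `A` that returns to its initial vertex and multiplies a nonzero integer
by an integer leaves it unchanged. -/
def TrivialReturns (G : LGraph V E) (A : Set E) : Prop :=
  ∀ ⦃v : V⦄ ⦃x k : ℤ⦄, x ≠ 0 → G.Reach A (v, x) (v, k * x) → k = 1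

theorem trivialReturns_of_potential (hlab : ∀ a, G.lab a ≠ 0) {f : V → ℤ} (hf0 : ∀ v, f v ≠ 0)
    (hf : ∀ a ∈ A, G.lab a * f (G.t a) = G.lab (G.bar a) * f (G.o a)) : G.TrivialReturns A := by
  intro v x k hx hs
  refine mul_right_cancel₀ (mul_ne_zero hx (hf0 v)) ?_
  linear_combination hs.mul_potential hlab hf

theorem trivialReturns_pair_of_not_loop (hlab : ∀ a, G.lab a ≠ 0) {h : E} (hh : G.o h ≠ G.t h) :
    G.TrivialReturns {h, G.bar h} := by
  classical
  let f : V → ℤ := fun u => if u = G.o h then G.lab h else G.lab (G.bar h)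
  have hfo : f (G.o h) = G.lab h := if_pos rfl
  have hft : f (G.t h) = G.lab (G.bar h) := if_neg hh.symm
  refine trivialReturns_of_potential hlab (f := f) (fun v => ?_) ?_
  · simp only [f]
    split_ifs
    exacts [hlab h, hlab (G.bar h)]
  · rintro a (rfl | rfl)
    · rw [hfo, hft, mul_comm]
    · rw [t_bar, G.bar_bar, ← t, hfo, hft, mul_comm]

theorem trivialReturns_pair_of_dvd (hlab : ∀ a, G.lab a ≠ 0) {h : E}
    (hdvd : G.lab h ∣ G.lab (G.bar h) → G.lab h = G.lab (G.bar h))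
    (hdvd_bar : G.lab (G.bar h) ∣ G.lab h → G.lab (G.bar h) = G.lab h) :
    G.TrivialReturns {h, G.bar h} := by
  intro v x k hx hs
  obtain ⟨i, j, hij⟩ := hs.exists_mul_pow_eq
  have hpow (m : ℕ) : x * (G.lab h ^ m * G.lab (G.bar h) ^ m) ≠ 0 :=
    mul_ne_zero hx (mul_ne_zero (pow_ne_zero m (hlab h)) (pow_ne_zero m (hlab (G.bar h))))
  rcases le_total i j with hle | hle <;> obtain ⟨n, rfl⟩ := Nat.exists_eq_add_of_le hle
  · refine eq_one_of_mul_pow_eq_pow (n := n) (hlab (G.bar h)) hdvd_bar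
      (mul_left_cancel₀ (hpow i) ?_)
    linear_combination hij
  · refine eq_one_of_mul_pow_eq_pow (n := n) (hlab h) hdvd (mul_left_cancel₀ (hpow j) ?_)
    linear_combination hij

theorem trivialReturns_pair (hlab : ∀ a, G.lab a ≠ 0) {h : E}
    (hloop : ∀ a ∈ ({h, G.bar h} : Set E),
      G.o a = G.t a → G.lab a ∣ G.lab (G.bar a) → G.lab a = G.lab (G.bar a)) :
    G.TrivialReturns {h, G.bar h} := by
  by_cases hh : G.o h = G.t h
  · refine trivialReturns_pair_of_dvd hlab (hloop h (.inl rfl) hh) ?_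
    have hbar := hloop (G.bar h) (.inr rfl)
    rw [t_bar, G.bar_bar] at hbar
    exact hbar hh.symm
  · exact trivialReturns_pair_of_not_loop hlab hh

/-! ### The slid graph -/

variable {e f g : E} {c : ℤ}

theorem slide_bar (a : E) : (G.slide g f).bar a = G.bar a := rfl

theorem slide_o_self : (G.slide g f).o g = G.t f := by simp [slide]

theorem slide_o_of_ne {a : E} (h : a ≠ g) : (G.slide g f).o a = G.o a := by simp [slide, h]

theorem slide_t_of_ne {a : E} (h : G.bar a ≠ g) : (G.slide g f).t a = G.t a := slide_o_of_ne h

theorem slide_lab_of_ne {a : E} (h : a ≠ g) : (G.slide g f).lab a = G.lab a := by simp [slide, h]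

theorem slide_lab_self (hf : G.lab f ≠ 0) (hc : G.lab g = G.lab f * c) :
    (G.slide g f).lab g = c * G.lab (G.bar f) := by
  have : (G.slide g f).lab g = G.lab g * G.lab (G.bar f) / G.lab f := by simp [slide]
  rw [this, hc, mul_assoc, Int.mul_ediv_cancel_left _ hf]

theorem slide_lab_ne_zero (hlab : ∀ a, G.lab a ≠ 0) (hfg : G.lab f ∣ G.lab g) (a : E) :
    (G.slide g f).lab a ≠ 0 := by
  obtain ⟨c, hc⟩ := hfg
  by_cases ha : a = g
  · subst ha
    rw [slide_lab_self (hlab f) hc]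
    exact mul_ne_zero (right_ne_zero_of_mul (hc ▸ hlab a)) (hlab (G.bar f))
  · rw [slide_lab_of_ne ha]
    exact hlab a

theorem Reach.slide (hA : A ⊆ {g, G.bar g}ᶜ) (h : G.Reach A s s') :
    (G.slide g f).Reach A s s' := by
  refine Relation.ReflTransGen.mono (fun _ _ hstep => ?_) _ _ h
  obtain ⟨a, ha, k⟩ := hstep
  have hag : a ≠ g := fun h => hA ha (.inl h)
  have habar : G.bar a ≠ g := fun h => hA ha (.inr (by simp [← h, G.bar_bar]))
  simpa only [slide_bar, slide_o_of_ne hag, slide_t_of_ne habar, slide_lab_of_ne hag,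
    slide_lab_of_ne habar] using Step.mk (G := G.slide g f) a ha k

/-- The edges other than `e`, `g` and their inverses. -/
def others (G : LGraph V E) (e g : E) : Set E := {e, G.bar e, g, G.bar g}ᶜ

theorem bar_mem_others {a : E} (ha : a ∈ G.others e g) : G.bar a ∈ G.others e g := by
  have := G.bar_bar
  simp only [others, Set.mem_compl_iff, Set.mem_insert_iff, Set.mem_singleton_iff] at *
  grind

theorem others_subset_compl_left : G.others e g ⊆ {e, G.bar e}ᶜ := by
  intro a; simp only [others]; grind

theorem others_subset_compl_right : G.others e g ⊆ {g, G.bar g}ᶜ := by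
  intro a; simp only [others]; grind

theorem eq_or_eq_bar_of_mem_others [Finite E] (hE : Nat.card E ≤ 6) (hge : g ≠ e)
    (hgbar : g ≠ G.bar e) {a b : E} (ha : a ∈ G.others e g) (hb : b ∈ G.others e g) :
    b = a ∨ b = G.bar a := by
  have := Fintype.ofFinite E
  by_contra! hne
  have hnodup : [e, G.bar e, g, G.bar g, a, G.bar a, b].Nodup := by
    have h1 := G.bar_bar
    have h2 := G.bar_ne
    simp only [others, Set.mem_compl_iff, Set.mem_insert_iff, Set.mem_singleton_iff] at ha hb
    simp only [List.nodup_cons, List.mem_cons, List.not_mem_nil]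
    grind
  have := hnodup.length_le_card
  rw [Nat.card_eq_fintype_card] at hE
  simp only [List.length_cons, List.length_nil] at this
  omega

theorem lab_eq_lab_bar_of_not_hasStrictMonotoneCycle_slide (hlab : ∀ a, G.lab a ≠ 0)
    (hdvd : G.lab f ∣ G.lab g) (hno : ¬ (G.slide g f).HasStrictMonotoneCycle) {a : E}
    (hag : a ≠ g) (hbag : G.bar a ≠ g) (hloop : G.o a = G.t a) (haa : G.lab a ∣ G.lab (G.bar a)) :
    G.lab a = G.lab (G.bar a) := by
  have := lab_eq_lab_bar_of_dvd (slide_lab_ne_zero hlab hdvd) hno (a := a)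
  simp only [slide_bar, slide_o_of_ne hag, slide_t_of_ne hbag, slide_lab_of_ne hag,
    slide_lab_of_ne hbag] at this
  exact this hloop haa

theorem ne_of_mem_others {a : E} (ha : a ∈ G.others e g) : a ≠ g :=
  fun h => others_subset_compl_right ha (.inl h)

theorem trivialReturns_others [Finite E] (hlab : ∀ a, G.lab a ≠ 0) (hE : Nat.card E ≤ 6)
    (hge : g ≠ e) (hgbar : g ≠ G.bar e) (hdvd : G.lab f ∣ G.lab g)
    (hno : ¬ (G.slide g f).HasStrictMonotoneCycle) : G.TrivialReturns (G.others e g) := by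
  rcases (G.others e g).eq_empty_or_nonempty with hempty | ⟨a, ha⟩
  · rw [hempty]
    exact trivialReturns_of_potential hlab (f := 1) (by simp) (by simp)
  · intro v x k hx h
    have hsub : G.others e g ⊆ {a, G.bar a} := fun b hb =>
      eq_or_eq_bar_of_mem_others hE hge hgbar ha hb
    refine trivialReturns_pair hlab ?_ hx (h.mono hsub)
    intro b hb
    have hb : b ∈ G.others e g := by
      rcases hb with rfl | rfl
      exacts [ha, bar_mem_others ha]
    exact lab_eq_lab_bar_of_not_hasStrictMonotoneCycle_slide hlab hdvd hno (ne_of_mem_others hb)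
      (ne_of_mem_others (bar_mem_others hb))

/-! ### Sliding over the inverse of `e` -/

theorem CanSlide.ne_of_bar (h : G.CanSlide g (G.bar e)) : g ≠ e := fun hge => h.2.1 (by rw [hge])

theorem CanSlide.pair_subset_compl_pair (h : G.CanSlide g (G.bar e)) :
    {e, G.bar e} ⊆ ({g, G.bar g}ᶜ : Set E) := by
  have hbarge : G.bar g ≠ e := fun hge => h.1 (by rw [← hge, G.bar_bar])
  have hbar : G.bar g ≠ G.bar e := fun hge => h.ne_of_bar (by rw [← G.bar_bar g, hge, G.bar_bar])
  rintro a (rfl | rfl) (ha | ha)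
  exacts [h.ne_of_bar ha.symm, hbarge ha.symm, h.1 ha, hbar ha.symm]

/-- The states reached without `e`, `g` and their inverses from `(t e, λ(ē))` or, if `c` is a unit,
from `(t g, c λ(ḡ))`. It is the invariant of transport from `(t e, λ(ē))` without `e` and `ē`, where
`λ(g) = λ(ē) c`. -/
def Tracked (G : LGraph V E) (e g : E) (c : ℤ) (s : V × ℤ) : Prop :=
  G.Reach (G.others e g) (G.t e, G.lab (G.bar e)) s ∨
    c * c = 1 ∧ G.Reach (G.others e g) (G.t g, c * G.lab (G.bar g)) s

section SlideOverBar

variable (hlab : ∀ a, G.lab a ≠ 0) (hcan : G.CanSlide g (G.bar e))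
  (hc : G.lab g = G.lab (G.bar e) * c)
  (hno : ¬ (G.slide g (G.bar e)).HasStrictMonotoneCycle)

include hlab hno

include hcan in
theorem eq_one_of_reach_base
    (h : G.Reach (G.others e g) (G.t e, G.lab (G.bar e)) (G.o e, k * G.lab e)) : k = 1 := by
  refine eq_one_of_reach_of_not_hasStrictMonotoneCycle
    (slide_lab_ne_zero hlab hcan.2.2.2) hno (e := e) ?_
  rw [slide_bar, slide_t_of_ne hcan.1, slide_o_of_ne hcan.ne_of_bar.symm, slide_lab_of_ne hcan.1,
    slide_lab_of_ne hcan.ne_of_bar.symm]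
  exact (h.slide others_subset_compl_right).mono others_subset_compl_left

include hc

theorem eq_one_of_reach_slid
    (h : G.Reach {g, G.bar g}ᶜ (G.t g, G.lab (G.bar g)) (G.o e, k * (c * G.lab e))) : k = 1 := by
  refine eq_one_of_reach_of_not_hasStrictMonotoneCycle
    (slide_lab_ne_zero hlab ⟨c, hc⟩) hno (e := g) ?_
  rw [slide_bar, slide_o_self, slide_t_of_ne (G.bar_ne g), slide_lab_of_ne (G.bar_ne g),
    slide_lab_self (hlab _) hc, t_bar, G.bar_bar]
  exact h.slide subset_rfl

theorem eq_one_of_reach_slid_bar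
    (h : G.Reach {g, G.bar g}ᶜ (G.o e, c * G.lab e) (G.t g, k * G.lab (G.bar g))) : k = 1 := by
  refine eq_one_of_reach_of_not_hasStrictMonotoneCycle
    (slide_lab_ne_zero hlab ⟨c, hc⟩) hno (e := (G.slide g (G.bar e)).bar g) ?_
  rw [t_bar, LGraph.bar_bar, slide_o_self, slide_bar, slide_o_of_ne (G.bar_ne g),
    slide_lab_of_ne (G.bar_ne g), slide_lab_self (hlab _) hc, t_bar, G.bar_bar, Set.pair_comm]
  exact h.slide subset_rfl

include hcan

theorem eq_one_of_reach_terminus_origin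
    (h : G.Reach (G.others e g) (G.t g, G.lab (G.bar g)) (G.o g, k * G.lab g)) : k = 1 := by
  refine eq_one_of_reach_slid hlab hc hno ?_
  have hstep := reach_edge_bar (G := G) (hcan.pair_subset_compl_pair (.inr rfl)) (k * c)
  have hg : (G.t e, k * c * G.lab (G.bar e)) = (G.o g, k * G.lab g) := by
    rw [hc, ← hcan.2.2.1, t, mul_assoc, mul_comm c]
  rw [hg, mul_assoc] at hstep
  exact (h.mono others_subset_compl_right).trans hstep

theorem eq_one_of_reach_origin_terminus
    (h : G.Reach (G.others e g) (G.o g, G.lab g) (G.t g, k * G.lab (G.bar g))) : k = 1 := by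
  refine eq_one_of_reach_slid_bar hlab hc hno ?_
  have hstep := reach_edge (G := G) (hcan.pair_subset_compl_pair (.inl rfl)) c
  have hg : (G.t e, c * G.lab (G.bar e)) = (G.o g, G.lab g) := by
    rw [hc, ← hcan.2.2.1, t, mul_comm c]
  rw [hg] at hstep
  exact hstep.trans (h.mono others_subset_compl_right)

theorem eq_of_tracked_origin (hret : G.TrivialReturns (G.others e g))
    (h : G.Tracked e g c (G.o g, k * G.lab g)) : c * c = 1 ∧ k = c := by
  have hto : G.o g = G.t e := hcan.2.2.1.symm
  rcases h with hP | ⟨hcc, hR⟩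
  · rw [hto, hc, mul_comm (G.lab _), ← mul_assoc] at hP
    have hkc : k * c = 1 := hret (hlab (G.bar e)) hP
    obtain rfl := Int.eq_of_mul_eq_one hkc
    exact ⟨hkc, rfl⟩
  · have hR' := hR.const_mul c
    simp only [← mul_assoc, hcc, one_mul] at hR'
    have hck : c * k = 1 := eq_one_of_reach_terminus_origin hlab hcan hc hno hR'
    exact ⟨hcc, (Int.eq_of_mul_eq_one hck).symm⟩

theorem mul_eq_one_of_tracked_terminus (hret : G.TrivialReturns (G.others e g))
    (h : G.Tracked e g c (G.t g, k * G.lab (G.bar g))) : c * k = 1 := by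
  have hto : G.o g = G.t e := hcan.2.2.1.symm
  rcases h with hP | ⟨hcc, hR⟩
  · have hP' := hP.const_mul c
    rw [← hto, mul_comm c (G.lab _), ← hc, ← mul_assoc] at hP'
    exact eq_one_of_reach_origin_terminus hlab hcan hc hno hP'
  · have hR' := hR.const_mul c
    rw [← mul_assoc, hcc, one_mul, ← mul_assoc] at hR'
    exact hret (hlab (G.bar g)) hR'

theorem tracked_of_reach (hret : G.TrivialReturns (G.others e g))
    (h : G.Reach {e, G.bar e}ᶜ (G.t e, G.lab (G.bar e)) s) : G.Tracked e g c s := by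
  induction h with
  | refl => exact .inl .refl
  | tail _ hstep ih =>
    obtain ⟨a, ha, k⟩ := hstep
    by_cases hag : a = g
    · subst hag
      obtain ⟨hcc, rfl⟩ := eq_of_tracked_origin hlab hcan hc hno hret ih
      exact .inr ⟨hcc, .refl⟩
    by_cases hagb : a = G.bar g
    · subst hagb
      rw [t_bar, G.bar_bar]
      have hck : c * k = 1 := mul_eq_one_of_tracked_terminus hlab hcan hc hno hret ih
      left
      rw [← hcan.2.2.1, ← t, hc, mul_left_comm, mul_comm k, hck, mul_one]
    · have haS : a ∈ G.others e g := by
        simp only [others, Set.mem_compl_iff, Set.mem_insert_iff, Set.mem_singleton_iff] at *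
        tauto
      exact ih.imp (·.trans (reach_edge haS k)) (.imp_right (·.trans (reach_edge haS k)))

theorem eq_one_of_tracked (h : G.Tracked e g c (G.o e, k * G.lab e)) : k = 1 := by
  rcases h with hP | ⟨hcc, hR⟩
  · exact eq_one_of_reach_base hlab hcan hno hP
  · have hR' := (hR.mono others_subset_compl_right).const_mul c
    rw [← mul_assoc, hcc, one_mul, mul_left_comm] at hR'
    exact eq_one_of_reach_slid hlab hc hno hR'

end SlideOverBar

theorem hasStrictMonotoneCycle_slide_of_trivialReturns (hlab : ∀ a, G.lab a ≠ 0)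
    (hcan : G.CanSlide g (G.bar e)) (hret : G.TrivialReturns (G.others e g)) {l : List E}
    (hl : G.IsStrictMonotoneCycle l e) : (G.slide g (G.bar e)).HasStrictMonotoneCycle := by
  by_contra hno
  obtain ⟨c, hc⟩ := hcan.2.2.2
  obtain ⟨k, hk, hreach⟩ := (exists_isStrictMonotoneCycle_iff hlab).1 ⟨l, hl⟩
  exact hk (eq_one_of_tracked hlab hcan hc hno (tracked_of_reach hlab hcan hc hno hret hreach))

end LGraph

theorem stmt2_general {V E : Type} [Finite E] (G : LGraph V E) (hE : Nat.card E ≤ 6)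
    (hlab : ∀ a, G.lab a ≠ 0) {l : List E} {e g : E} (hl : G.IsStrictMonotoneCycle l e)
    (hcan : G.CanSlide g (G.bar e)) : (G.slide g (G.bar e)).HasStrictMonotoneCycle := by
  by_contra hno
  have hret : G.TrivialReturns (G.others e g) :=
    LGraph.trivialReturns_others hlab hE hcan.ne_of_bar hcan.1.symm hcan.2.2.2 hno
  exact hno (LGraph.hasStrictMonotoneCycle_slide_of_trivialReturns hlab hcan hret hl)

/-- In an `n`-rose with positive labels, `n ≤ 3`, carrying a strict monotone
cycle `(e₁,…,eₛ,e)`, sliding some `eᵢ` or `ēᵢ` over the edge `ē` yields a graph which again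
contains a strict monotone cycle. -/
theorem stmt2 {V E : Type} [Finite V] [Finite E] (G : LGraph V E) (n : ℕ)
    (hn : n ≤ 3) (hrose : G.IsRose n) (hpos : G.Positive)
    (l : List E) (e : E) (hsmc : G.IsStrictMonotoneCycle l e)
    (g : E) (hg : g ∈ l ∨ G.bar g ∈ l)
    (hcan : G.CanSlide g (G.bar e)) :
    (G.slide g (G.bar e)).HasStrictMonotoneCycle :=
  stmt2_general G (by rw [hrose.2]; omega) (fun a => (hpos a).ne') hsmc hcan
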